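/- Let v : ℝ → ℝ be 1-periodic, even (v(−x) = v(x) for all x), and Hölder continuous; let α be irrational and θ ∈ ℝ with δ(α,θ) > 0. Then the quasiperiodic Schrödinger operator (H_{v,α,θ}u)(n) = u(n+1) + u(n−1) + v(θ + nα)u(n) on ℓ²(ℤ) does not have SULE. -/

import Mathlib

noncomputable section

open Filter Real

def distToInt (x : ℝ) : ℝ := |x - round x|

def IsDiophantine (α : ℝ) : Prop :=
  ∃ κ τ : ℝ, 0 < κ ∧ 0 < τ ∧ ∀ k : ℤ, k ≠ 0 → τ / |(k : ℝ)| ^ κ ≤ distToInt (k * α)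

def deltaPhase (α θ : ℝ) : ℝ :=
  limsup (fun n : ℤ => -Real.log (distToInt (2 * θ + n * α)) / |(n : ℝ)|) cofinite

def amoPot (lam α θ : ℝ) : ℤ → ℝ := fun n => 2 * lam * Real.cos (2 * Real.pi * (θ + n * α))

def IsEigenfunction (g : ℤ → ℝ) (E : ℝ) (φ : ℤ → ℝ) : Prop :=
  ∀ n : ℤ, φ (n + 1) + φ (n - 1) + g n * φ n = E * φ n

def deltaPot (g : ℤ → ℝ) : ℝ :=
  limsup (fun n : ℤ => -Real.log (⨆ m : ℤ, |g (n - m) - g m|) / |(n : ℝ)|) cofinite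

def matNorm (M : Matrix (Fin 2) (Fin 2) ℝ) : ℝ := ⨆ p : Fin 2 × Fin 2, |M p.1 p.2|

def transfer (g : ℤ → ℝ) (E : ℝ) : ℕ → ℤ → Matrix (Fin 2) (Fin 2) ℝ
  | 0, _ => 1
  | n + 1, k => !![E - g (k + n), -1; 1, 0] * transfer g E n k

def LyapSup (g : ℤ → ℝ) (E : ℝ) : ℝ :=
  limsup (fun n : ℕ => ⨆ k : ℤ, Real.log (matNorm (transfer g E n k)) / n) atTop

def HasSULE (g : ℤ → ℝ) : Prop :=
  ∃ (Φ : HilbertBasis ℕ ℝ (lp (fun _ : ℤ => ℝ) 2)) (ns : ℕ → ℤ) (γ : ℝ),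
    0 < γ ∧
    (∀ s : ℕ, ∃ E : ℝ, IsEigenfunction g E (fun n => Φ s n)) ∧
    ∀ ε : ℝ, 0 < ε → ∃ C : ℝ,
      ∀ (s : ℕ) (n : ℤ),
        |Φ s n| ≤ C * Real.exp (ε * |(ns s : ℝ)|) * Real.exp (-γ * |(n : ℝ) - (ns s : ℝ)|)

open Topology

lemma aux_wronskian (φ ψ g g' : ℤ → ℝ) (E β : ℝ) (hβ : 0 ≤ β)
    (h1 : IsEigenfunction g E φ) (h2 : IsEigenfunction g' E ψ)
    (hg : ∀ n, |g' n - g n| ≤ β)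
    (s1 : HasSum (fun n => φ n ^ 2) 1) (s2 : HasSum (fun n => ψ n ^ 2) 1) (n : ℤ) :
    |φ (n + 1) * ψ n - φ n * ψ (n + 1)| ≤ β := by
  set W : ℤ → ℝ := fun n => φ (n + 1) * ψ n - φ n * ψ (n + 1) with hW
  have hstep : ∀ n, |W n| ≤ |W (n + 1)| + β * ((φ (n + 1) ^ 2 + ψ (n + 1) ^ 2) / 2) := by
    intro n
    have e1 := h1 (n + 1)
    have e2 := h2 (n + 1)
    have e3 : W n = W (n + 1) + -((g' (n + 1) - g (n + 1)) * (φ (n + 1) * ψ (n + 1))) := by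
      simp only [hW, add_sub_cancel_right] at *
      linear_combination (-ψ (n+1)) * e1 + φ (n+1) * e2
    rw [e3]
    refine (abs_add_le _ _).trans ?_
    rw [abs_neg, abs_mul]
    gcongr
    · exact hg _
    · rw [abs_le]; constructor <;> nlinarith [sq_nonneg (φ (n+1) + ψ (n+1)), sq_nonneg (φ (n+1) - ψ (n+1))]
  have hN : ∀ N : ℕ, |W n| ≤ |W (n + N)| +
      β * (∑ i ∈ Finset.range N, (φ (n + i + 1) ^ 2 + ψ (n + i + 1) ^ 2) / 2) := by
    intro N
    induction N with
    | zero => simp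
    | succ N ih =>
      have := hstep (n + N)
      rw [Finset.sum_range_succ, mul_add]
      push_cast
      rw [← add_assoc n]
      linarith
  have hinj : Function.Injective (fun i : ℕ => n + (i : ℤ) + 1) := by
    intro a b h; simp at h; exact h
  have hsum : ∀ N : ℕ, (∑ i ∈ Finset.range N, (φ (n + i + 1) ^ 2 + ψ (n + i + 1) ^ 2) / 2) ≤ 1 := by
    intro N
    have s3 : HasSum (fun n => (φ n ^ 2 + ψ n ^ 2) / 2) 1 := by
      have := (s1.add s2).div_const 2
      norm_num at this; exact this
    have := sum_le_hasSum ((Finset.range N).map ⟨_, hinj⟩) (fun i _ => by positivity) s3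
    simpa using this
  have ht : ∀ χ : ℤ → ℝ, HasSum (fun n => χ n ^ 2) 1 → Tendsto χ cofinite (𝓝 0) := by
    intro χ h
    have := h.summable.tendsto_cofinite_zero
    have h3 := this.sqrt
    simp only [Real.sqrt_sq_eq_abs, Real.sqrt_zero] at h3
    exact (tendsto_zero_iff_abs_tendsto_zero _).2 h3
  have hinj0 : Function.Injective (fun i : ℕ => n + (i : ℤ)) := by
    intro a b h; simpa using h
  have c0 : Tendsto (fun i : ℕ => n + (i : ℤ)) atTop cofinite := by
    rw [← Nat.cofinite_eq_atTop]; exact hinj0.tendsto_cofinite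
  have c1 : Tendsto (fun i : ℕ => n + (i : ℤ) + 1) atTop cofinite := by
    rw [← Nat.cofinite_eq_atTop]; exact hinj.tendsto_cofinite
  have hlim : Tendsto (fun N : ℕ => |W (n + N)| + β) atTop (𝓝 β) := by
    have a1 := ((ht φ s1).comp c1).mul ((ht ψ s2).comp c0)
    have a2 := ((ht φ s1).comp c0).mul ((ht ψ s2).comp c1)
    have := ((a1.sub a2).abs).add_const β
    simpa [hW, Function.comp_def] using this
  refine ge_of_tendsto' hlim fun N => (hN N).trans ?_
  have := mul_le_mul_of_nonneg_left (hsum N) hβ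
  linarith

lemma aux_E (φ g : ℤ → ℝ) (E G : ℝ) (h1 : IsEigenfunction g E φ)
    (hG : ∀ n, |g n| ≤ G) (s1 : HasSum (fun n => φ n ^ 2) 1) : |E| ≤ G + 2 := by
  obtain ⟨n0, hn0⟩ : ∃ n, φ n ≠ 0 := by
    by_contra! h
    simp only [h] at s1
    have := s1.unique (a₂ := 0) (by convert (hasSum_zero : HasSum (fun _ : ℤ => (0:ℝ)) 0) using 2; norm_num)
    norm_num at this
  have ht := s1.summable.tendsto_cofinite_zero
  have hpos : 0 < φ n0 ^ 2 := by positivity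
  have hfin : {n | φ n0 ^ 2 ≤ φ n ^ 2}.Finite := by
    have := ht.eventually (gt_mem_nhds hpos)
    rw [Filter.eventually_cofinite] at this
    simpa only [not_lt] using this
  obtain ⟨m, hm, hmax⟩ := Set.exists_max_image _ (fun n => φ n ^ 2) hfin ⟨n0, le_refl (φ n0 ^ 2)⟩
  have hall : ∀ n, |φ n| ≤ |φ m| := by
    intro n
    rw [← sq_le_sq]
    by_cases h : φ n0 ^ 2 ≤ φ n ^ 2
    · exact hmax n h
    · exact (not_le.1 h).le.trans hm
  have hmp : 0 < |φ m| := by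
    have : 0 < φ m ^ 2 := lt_of_lt_of_le hpos hm
    exact abs_pos.2 (by rintro h; simp [h] at this)
  have e : E * φ m = φ (m+1) + φ (m-1) + g m * φ m := (h1 m).symm
  have : |E| * |φ m| ≤ (G + 2) * |φ m| := by
    rw [← abs_mul, e]
    have b1 := abs_add_le (φ (m+1) + φ (m-1)) (g m * φ m)
    have b2 := abs_add_le (φ (m+1)) (φ (m-1))
    have b3 := mul_le_mul_of_nonneg_right (hG m) hmp.le
    rw [← abs_mul] at b3
    linarith [hall (m+1), hall (m-1)]
  exact le_of_mul_le_mul_right this hmp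

/-- growth -/
lemma aux_grow (u : ℤ → ℝ) (m : ℤ) (K D : ℝ) (hK : 0 ≤ K) (hD : 0 ≤ D)
    (h0 : |u m| ≤ D) (h1 : |u (m + 1)| ≤ D)
    (hr : ∀ n, |u (n + 1)| ≤ K * |u n| + |u (n - 1)| + D) (i : ℕ) :
    |u (m + i)| ≤ (K + 2) ^ i * D ∧ |u (m + i + 1)| ≤ (K + 2) ^ (i + 1) * D := by
  induction i with
  | zero =>
    constructor
    · simpa using h0
    · simp; nlinarith
  | succ i ih =>
    push_cast
    rw [← add_assoc]
    refine ⟨ih.2, ?_⟩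
    have := hr (m + i + 1)
    rw [add_sub_cancel_right] at this
    refine this.trans ?_
    have hp : 1 ≤ (K + 2) ^ i := one_le_pow₀ (by linarith)
    have a1 := mul_le_mul_of_nonneg_left ih.2 hK
    have a2 := ih.1
    have a3 : D ≤ (K + 2) ^ i * D := by nlinarith
    have a4 : 0 ≤ (K + 2) ^ i * D := by positivity
    have a5 : (K + 2) ^ (i + 1 + 1) * D = (K * (K + 2) ^ (i+1) * D) + 2 * K * ((K + 2) ^ i * D)
      + 4 * ((K + 2) ^ i * D) := by ring
    have : 0 ≤ K * ((K + 2) ^ i * D) := by positivity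
    nlinarith

lemma aux_reflect (φ g : ℤ → ℝ) (E K C b : ℝ) (k : ℤ) (hC : 0 ≤ C) (hb : 0 ≤ b) (hb1 : b ≤ 1)
    (h1 : IsEigenfunction g E φ) (hK : ∀ n, |E - g n| ≤ K)
    (hg : ∀ n, |g (k - n) - g n| ≤ C * b ^ 2)
    (s1 : HasSum (fun n => φ n ^ 2) 1) (i : ℕ) :
    |φ (k / 2 + i)| ≤ |φ (k - (k / 2 + i))| + (K + 2) ^ i * ((C + K + 2) * b) := by
  have hK0 : 0 ≤ K := (abs_nonneg _).trans (hK 0)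
  have hle : ∀ n, |φ n| ≤ 1 := by
    intro n
    have := le_hasSum s1 n (fun j _ => sq_nonneg _)
    simpa using this
  set ψ : ℤ → ℝ := fun n => φ (k - n) with hψ
  have h2 : IsEigenfunction (fun n => g (k - n)) E ψ := by
    intro n
    have := h1 (k - n)
    simp only [hψ]
    rw [show k - (n + 1) = k - n - 1 by ring, show k - (n - 1) = k - n + 1 by ring]
    linarith
  have s2 : HasSum (fun n => ψ n ^ 2) 1 := by
    have := (Equiv.subLeft k).hasSum_iff (f := fun n => φ n ^ 2) (a := 1)
    exact this.2 s1
  have hWr := aux_wronskian φ ψ g _ E (C * b ^ 2) (by positivity) h1 h2 hg s1 s2 (k / 2)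
  set m := k / 2 with hm
  have hrec : ∀ σ : ℝ, |σ| = 1 → ∀ n, |φ (n+1) - σ * ψ (n+1)| ≤
      K * |φ n - σ * ψ n| + |φ (n-1) - σ * ψ (n-1)| + (C + K + 2) * b := by
    intro σ hσ n
    have e1 := h1 n
    have e2 := h2 n
    have e3 : φ (n+1) - σ * ψ (n+1) = (E - g n) * (φ n - σ * ψ n) + -(φ (n-1) - σ * ψ (n-1))
      + σ * ((g (k - n) - g n) * ψ n) := by
      simp only at e1 e2
      linear_combination e1 - σ * e2
    rw [e3]
    refine (abs_add_three _ _ _).trans ?_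
    rw [abs_neg, abs_mul, abs_mul σ, hσ, one_mul, abs_mul]
    have a1 := mul_le_mul_of_nonneg_right (hK n) (abs_nonneg (φ n - σ * ψ n))
    have a2 : |g (k - n) - g n| * |ψ n| ≤ C * b ^ 2 * 1 :=
      mul_le_mul (hg n) (hle _) (abs_nonneg _) (by positivity)
    have a3 : C * b ^ 2 ≤ C * b := by
      apply mul_le_mul_of_nonneg_left _ hC; nlinarith
    have : 0 ≤ (K + 2) * b := by positivity
    nlinarith
  have hfin : ∀ σ : ℝ, |σ| = 1 → |φ m - σ * ψ m| ≤ (C + K + 2) * b →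
      |φ (m+1) - σ * ψ (m+1)| ≤ (C + K + 2) * b →
      |φ (m + i)| ≤ |φ (k - (m + i))| + (K + 2) ^ i * ((C + K + 2) * b) := by
    intro σ hσ c1 c2
    have := (aux_grow (fun n => φ n - σ * ψ n) m K ((C + K + 2) * b) hK0 (by positivity) c1 c2
      (hrec σ hσ) i).1
    have h3 := abs_add_le (σ * ψ (m+i)) (φ (m + i) - σ * ψ (m+i))
    rw [abs_mul, hσ, one_mul] at h3
    simp only [add_sub_cancel] at h3
    have h4 : |ψ (m + i)| = |φ (k - (m + i))| := rfl
    have h5 : |φ (m + i) - σ * ψ (m + i)| ≤ (K + 2) ^ i * ((C + K + 2) * b) := this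
    linarith
  have hsplit : ∀ x y : ℝ, |x * y| ≤ C * b ^ 2 → |x| ≤ b ∨ |y| ≤ C * b := by
    intro x y hxy
    by_contra! h
    rw [abs_mul] at hxy
    have : b * (C * b) < |x| * |y| := by
      apply mul_lt_mul'' h.1 h.2 hb (by positivity)
    nlinarith
  have hKb : 0 ≤ K * b := by positivity
  have hCb : 0 ≤ C * b := by positivity
  rcases Int.even_or_odd' k with ⟨t, ht | ht⟩
  · have hmt : m = t := by omega
    have p0 : ψ m = φ m := by simp only [hψ]; congr 1; omega
    have p1 : ψ (m+1) = φ (m-1) := by simp only [hψ]; congr 1; omega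
    rw [p0, p1] at hWr
    rcases hsplit (φ m) (φ (m+1) - φ (m-1)) (by convert hWr using 2; ring) with h | h
    · apply hfin (-1) (by norm_num)
      · rw [p0, show φ m - -1 * φ m = 2 * φ m by ring, abs_mul]; norm_num; nlinarith
      · have := h1 m
        rw [p1, show φ (m+1) - -1 * φ (m-1) = (E - g m) * φ m by linarith, abs_mul]
        have := mul_le_mul (hK m) h (abs_nonneg _) hK0
        nlinarith
    · apply hfin 1 (by norm_num)
      · rw [p0, one_mul, sub_self, abs_zero]; positivity
      · rw [p1, one_mul]; nlinarith
  · have hmt : m = t := by omega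
    have p0 : ψ m = φ (m+1) := by simp only [hψ]; congr 1; omega
    have p1 : ψ (m+1) = φ m := by simp only [hψ]; congr 1; omega
    rw [p0, p1] at hWr
    rcases hsplit (φ (m+1) + φ m) (φ (m+1) - φ m) (by convert hWr using 2; ring) with h | h
    · apply hfin (-1) (by norm_num)
      · rw [p0, show φ m - -1 * φ (m+1) = φ (m+1) + φ m by ring]; nlinarith
      · rw [p1, show φ (m+1) - -1 * φ m = φ (m+1) + φ m by ring]; nlinarith
    · apply hfin 1 (by norm_num)
      · rw [p0, one_mul, abs_sub_comm]; nlinarith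
      · rw [p1, one_mul]; nlinarith

lemma aux_sum (f : ℕ → ℤ → ℝ) (h1 : ∀ s, HasSum (fun n => f s n ^ 2) 1)
    (h2 : ∀ n, HasSum (fun s => f s n ^ 2) 1) (j : ℤ) (B : ℤ → ℝ) (hB : Summable B)
    (hb : ∀ s n, |f s j * f s n| ≤ B n) : 1 ≤ ∑' n, B n := by
  have hB0 : ∀ n, 0 ≤ B n := fun n => (abs_nonneg _).trans (hb 0 n)
  have t1 : ∀ s, ∑' n, ENNReal.ofReal (f s n ^ 2) = 1 := by
    intro s
    rw [← ENNReal.ofReal_tsum_of_nonneg (fun n => sq_nonneg _) (h1 s).summable, (h1 s).tsum_eq]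
    simp
  have t2 : ∀ n, ∑' s, ENNReal.ofReal (f s n ^ 2) = 1 := by
    intro n
    rw [← ENNReal.ofReal_tsum_of_nonneg (fun n => sq_nonneg _) (h2 n).summable, (h2 n).tsum_eq]
    simp
  have key : (1 : ENNReal) ≤ ∑' n, ENNReal.ofReal (B n) := by
    calc (1 : ENNReal) = ∑' s, ENNReal.ofReal (f s j ^ 2) * ∑' n, ENNReal.ofReal (f s n ^ 2) := by
          simp only [t1, mul_one, t2]
      _ = ∑' n, ∑' s, ENNReal.ofReal (f s j ^ 2) * ENNReal.ofReal (f s n ^ 2) := by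
          simp only [← ENNReal.tsum_mul_left]
          exact ENNReal.tsum_comm
      _ ≤ ∑' n, ENNReal.ofReal (B n) := by
          refine ENNReal.tsum_le_tsum fun n => ?_
          have s3 : HasSum (fun s => B n * ((f s j ^ 2 + f s n ^ 2) / 2)) (B n) := by
            have := (((h2 j).add (h2 n)).div_const 2).mul_left (B n)
            norm_num at this; exact this
          calc _ ≤ ∑' s, ENNReal.ofReal (B n * ((f s j ^ 2 + f s n ^ 2) / 2)) := by
                refine ENNReal.tsum_le_tsum fun s => ?_
                rw [← ENNReal.ofReal_mul (sq_nonneg _)]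
                apply ENNReal.ofReal_le_ofReal
                have e : f s j ^ 2 * f s n ^ 2 = |f s j * f s n| * |f s j * f s n| := by
                  rw [abs_mul_abs_self]; ring
                rw [e]
                apply mul_le_mul (hb s n) _ (abs_nonneg _) (hB0 n)
                rw [abs_le]; constructor <;>
                  nlinarith [sq_nonneg (f s j + f s n), sq_nonneg (f s j - f s n)]
            _ = ENNReal.ofReal (B n) := by
                rw [← ENNReal.ofReal_tsum_of_nonneg _ s3.summable, s3.tsum_eq]
                intro s
                have := hB0 n
                positivity
  rw [← ENNReal.ofReal_tsum_of_nonneg hB0 hB] at key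
  simpa using key

lemma aux_basis (Φ : HilbertBasis ℕ ℝ (lp (fun _ : ℤ => ℝ) 2)) :
    (∀ s, HasSum (fun n => Φ s n ^ 2) 1) ∧ (∀ n, HasSum (fun s => Φ s n ^ 2) 1) := by
  constructor
  · intro s
    have h := lp.hasSum_inner (𝕜 := ℝ) (Φ s) (Φ s)
    have e : inner ℝ (Φ s) (Φ s) = (1 : ℝ) := by
      rw [real_inner_self_eq_norm_sq, Φ.orthonormal.1 s]; norm_num
    rw [e] at h
    have e2 : (fun n => Φ s n ^ 2) = fun i => inner ℝ (Φ s i) (Φ s i) := by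
      funext n
      simp only [RCLike.inner_apply, conj_trivial, pow_two]
    rw [e2]
    exact h
  · intro n
    have h := Φ.hasSum_inner_mul_inner (lp.single 2 n (1 : ℝ)) (lp.single 2 n (1 : ℝ))
    have e : inner ℝ (lp.single 2 n (1 : ℝ) : lp (fun _ : ℤ => ℝ) 2) (lp.single 2 n (1 : ℝ)) = (1 : ℝ) := by
      rw [lp.inner_single_left]; simp
    rw [e] at h
    have e2 : (fun s => Φ s n ^ 2) = fun i => inner ℝ (lp.single 2 n (1 : ℝ)) (Φ i) *
        inner ℝ (Φ i) (lp.single 2 n (1 : ℝ)) := by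
      funext s
      rw [lp.inner_single_left, lp.inner_single_right]
      simp only [RCLike.inner_apply, conj_trivial]
      ring
    rw [e2]
    exact h

lemma aux_exp_summable (a : ℝ) (ha : 0 < a) : Summable (fun n : ℤ => Real.exp (-a * |(n : ℝ)|)) := by
  have h : Summable (fun n : ℕ => Real.exp (n * (-a))) := Real.summable_exp_nat_mul_iff.2 (by linarith)
  apply Summable.of_nat_of_neg
  · refine h.congr fun n => ?_
    simp [mul_comm]
  · refine h.congr fun n => ?_
    simp [mul_comm]

lemma aux_sule (f : ℕ → ℤ → ℝ) (ns : ℕ → ℤ) (γ : ℝ) (hγ : 0 < γ)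
    (h : ∀ ε : ℝ, 0 < ε → ∃ C : ℝ, ∀ (s : ℕ) (n : ℤ),
        |f s n| ≤ C * Real.exp (ε * |(ns s : ℝ)|) * Real.exp (-γ * |(n : ℝ) - (ns s : ℝ)|))
    (ε : ℝ) (hε : 0 < ε) : ∃ C : ℝ, 0 < C ∧ ∀ (s : ℕ) (j n : ℤ),
      |f s j * f s n| ≤ C * Real.exp (ε * |(j : ℝ)| - γ / 2 * |(j : ℝ) - n|) := by
  set e0 := min (ε / 2) (γ / 4) with he0
  have hp : 0 < e0 := by positivity
  obtain ⟨C, hC⟩ := h e0 hp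
  refine ⟨C * C + 1, by nlinarith, fun s j n => ?_⟩
  have := mul_le_mul (hC s j) (hC s n) (abs_nonneg _) ((abs_nonneg _).trans (hC s j))
  rw [← abs_mul] at this
  refine this.trans ?_
  have e : C * rexp (e0 * |(ns s : ℝ)|) * rexp (-γ * |(j : ℝ) - (ns s : ℝ)|) *
      (C * rexp (e0 * |(ns s : ℝ)|) * rexp (-γ * |(n : ℝ) - (ns s : ℝ)|)) =
      C * C * rexp (2 * e0 * |(ns s : ℝ)| - γ * |(j : ℝ) - (ns s : ℝ)| - γ * |(n : ℝ) - (ns s : ℝ)|) := by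
    rw [show 2 * e0 * |(ns s : ℝ)| - γ * |(j : ℝ) - (ns s : ℝ)| - γ * |(n : ℝ) - (ns s : ℝ)| =
      e0 * |(ns s : ℝ)| + e0 * |(ns s : ℝ)| + (-γ * |(j : ℝ) - (ns s : ℝ)|)
      + (-γ * |(n : ℝ) - (ns s : ℝ)|) by ring, Real.exp_add, Real.exp_add, Real.exp_add]
    ring
  rw [e]
  have hexp : 2 * e0 * |(ns s : ℝ)| - γ * |(j : ℝ) - (ns s : ℝ)| - γ * |(n : ℝ) - (ns s : ℝ)| ≤
      ε * |(j : ℝ)| - γ / 2 * |(j : ℝ) - n| := by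
    have t1 : |(ns s : ℝ)| ≤ |(j : ℝ)| + |(j : ℝ) - ns s| := by
      have := abs_sub (j : ℝ) ((j : ℝ) - ns s)
      simpa using this
    have t2 : |(j : ℝ) - n| ≤ |(j : ℝ) - ns s| + |(n : ℝ) - ns s| := by
      rw [abs_sub_comm (n : ℝ)]; exact abs_sub_le _ _ _
    have m1 : 2 * e0 * |(ns s : ℝ)| ≤ 2 * e0 * (|(j : ℝ)| + |(j : ℝ) - ns s|) := by gcongr
    have m2 : 2 * e0 * |(j : ℝ)| ≤ ε * |(j : ℝ)| := by
      gcongr; linarith [min_le_left (ε / 2) (γ / 4)]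
    have m3 : 2 * e0 * |(j : ℝ) - ns s| ≤ γ / 2 * |(j : ℝ) - ns s| := by
      gcongr; linarith [min_le_right (ε / 2) (γ / 4)]
    have m4 : γ / 2 * |(j : ℝ) - n| ≤ γ / 2 * (|(j : ℝ) - ns s| + |(n : ℝ) - ns s|) := by gcongr
    have : 0 ≤ γ / 2 * |(n : ℝ) - ns s| := by positivity
    nlinarith
  apply mul_le_mul (by linarith) (Real.exp_le_exp.2 hexp) (Real.exp_pos _).le (by nlinarith)

lemma aux_freq (α θ : ℝ) (hδ : 0 < deltaPhase α θ) (N : ℝ) :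
    ∃ k : ℤ, N ≤ |(k : ℝ)| ∧
      distToInt (2 * θ + k * α) ≤ Real.exp (-(deltaPhase α θ / 2) * |(k : ℝ)|) := by
  have hd : ∀ x, distToInt x ≤ 1 / 2 := fun x => abs_sub_round x
  have hd0 : ∀ x, 0 ≤ distToInt x := fun x => abs_nonneg _
  have hlt : deltaPhase α θ / 2 < limsup (fun n : ℤ => -Real.log (distToInt (2 * θ + n * α)) / |(n : ℝ)|)
      cofinite := by
    change _ < deltaPhase α θ
    linarith
  have hcob : IsCoboundedUnder (· ≤ ·) cofinite
      (fun n : ℤ => -Real.log (distToInt (2 * θ + n * α)) / |(n : ℝ)|) := by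
    apply IsBoundedUnder.isCoboundedUnder_le
    refine ⟨0, ?_⟩
    simp only [eventually_map]
    refine Eventually.of_forall fun n => ?_
    apply div_nonneg _ (abs_nonneg _)
    have := Real.log_nonpos (hd0 (2 * θ + n * α)) (by linarith [hd (2 * θ + n * α)])
    linarith
  have hfr := frequently_lt_of_lt_limsup hcob hlt
  have hev : ∀ᶠ k : ℤ in cofinite, max N 1 ≤ |(k : ℝ)| := by
    have := (tendsto_norm_cocompact_atTop (E := ℤ)).eventually (eventually_ge_atTop (max N 1))
    rw [cocompact_eq_cofinite] at this
    simpa [Int.norm_eq_abs] using this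
  obtain ⟨k, hk1, hk2⟩ := (hfr.and_eventually hev).exists
  refine ⟨k, (le_max_left _ _).trans hk2, ?_⟩
  have hkp : 0 < |(k : ℝ)| := lt_of_lt_of_le one_pos ((le_max_right _ _).trans hk2)
  rw [lt_div_iff₀ hkp] at hk1
  rcases (hd0 (2 * θ + k * α)).eq_or_lt with h | h
  · rw [← h]; positivity
  · rw [← Real.log_le_iff_le_exp h]; linarith

set_option maxHeartbeats 2000000

theorem no_SULE_quasiperiodic_even_holder
    (v : ℝ → ℝ) (hper : ∀ x : ℝ, v (x + 1) = v x)
    (heven : ∀ x : ℝ, v (-x) = v x)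
    (hHolder : ∃ Cv r : ℝ, 0 < Cv ∧ 0 < r ∧ ∀ x y : ℝ, |v x - v y| ≤ Cv * |x - y| ^ r)
    (α θ : ℝ) (hα : Irrational α)
    (hδ : 0 < deltaPhase α θ) :
    ¬ HasSULE (fun n : ℤ => v (θ + n * α)) := by
  rintro ⟨Φ, ns, γ, hγ, heig, hsule⟩
  obtain ⟨Cv, r, hCv, hr, hH⟩ := hHolder
  obtain ⟨hs1, hs2⟩ := aux_basis Φ
  have hperZ : ∀ (z : ℤ) (x : ℝ), v (x + z) = v x := by
    intro z x
    have h : Function.Periodic v 1 := hper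
    simpa using (h.int_mul z) x
  set G := |v 0| + Cv with hGdef
  have hG : ∀ x, |v x| ≤ G := by
    intro x
    have e : v x = v (Int.fract x) := by
      conv_lhs => rw [← Int.fract_add_floor x]
      exact hperZ _ _
    have h := hH (Int.fract x) 0
    rw [sub_zero, abs_of_nonneg (Int.fract_nonneg x)] at h
    have h2 : (Int.fract x) ^ r ≤ 1 :=
      Real.rpow_le_one (Int.fract_nonneg x) (Int.fract_lt_one x).le hr.le
    have h3 := abs_add_le (v (Int.fract x) - v 0) (v 0)
    rw [sub_add_cancel] at h3
    rw [e]
    nlinarith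
  have hG0 : 0 ≤ G := (abs_nonneg _).trans (hG 0)
  set δ := deltaPhase α θ with hδdef
  set c := δ / 2 * r with hc
  have hcp : 0 < c := by positivity
  set K := 2 * G + 2 with hKdef
  have hKp : 0 < K := by positivity
  set L := Real.log (K + 2) with hL
  have hLp : 0 < L := Real.log_pos (by linarith)
  set η := min 1 (c / (4 * L)) with hη
  have hηp : 0 < η := by positivity
  have hη1 : η ≤ 1 := min_le_left _ _
  have hηL : η * L ≤ c / 4 := by
    have : η ≤ c / (4 * L) := min_le_right _ _
    calc η * L ≤ c / (4 * L) * L := by gcongr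
      _ = c / 4 := by field_simp
  set κ := min (γ / 2 * η) (c / 4) with hκ
  have hκp : 0 < κ := by positivity
  have hκ1 : κ ≤ γ / 2 * η := min_le_left _ _
  have hκ2 : κ ≤ c / 4 := min_le_right _ _
  obtain ⟨C1, hC1, hB⟩ := aux_sule (fun s n => Φ s n) ns γ hγ hsule (κ / 16) (by positivity)
  set C2 := C1 * Real.exp (2 * (γ / 2)) + (Cv + K + 2) with hC2
  have hC2p : 0 < C2 := by positivity
  set M := C2 * C1 ^ 2 + 1 with hM
  have hM1 : 1 ≤ M := by have : 0 < C2 * C1 ^ 2 := by positivity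
                         linarith
  set S := ∑' n : ℤ, Real.exp (-(γ / 4) * |(n : ℝ)|) with hS
  have hSs := aux_exp_summable (γ / 4) (by positivity)
  obtain ⟨k, hkN, hkd⟩ := aux_freq α θ hδ (16 / κ * (M * S))
  set x := |(k : ℝ)| with hx
  have hx0 : 0 ≤ x := abs_nonneg _
  set b := Real.exp (-(c / 2) * x) with hb
  have hb1 : b ≤ 1 := Real.exp_le_one_iff.2 (by nlinarith)
  have hrefl : ∀ n : ℤ, |v (θ + ((k - n : ℤ) : ℝ) * α) - v (θ + n * α)| ≤ Cv * b ^ 2 := by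
    intro n
    have e : v (θ + ((k - n : ℤ) : ℝ) * α) =
        v (-(θ + ((k - n : ℤ) : ℝ) * α) + (round (2 * θ + k * α) : ℤ)) := by
      rw [hperZ, heven]
    rw [e, abs_sub_comm]
    refine (hH _ _).trans ?_
    have e2 : |θ + n * α - (-(θ + ((k - n : ℤ) : ℝ) * α) + (round (2 * θ + k * α) : ℤ))| =
        distToInt (2 * θ + k * α) := by
      unfold distToInt
      congr 1
      push_cast
      ring
    rw [e2]
    apply mul_le_mul_of_nonneg_left _ hCv.le
    refine (Real.rpow_le_rpow (abs_nonneg _) hkd hr.le).trans ?_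
    rw [← Real.exp_mul, hb, ← Real.exp_nat_mul]
    apply le_of_eq
    congr 1
    push_cast
    rw [hc]
    ring
  set i := ⌊η * x⌋₊ with hi
  have hi1 : (i : ℝ) ≤ η * x := Nat.floor_le (by positivity)
  have hi2 : η * x ≤ i + 1 := (Nat.lt_floor_add_one _).le
  set j : ℤ := k / 2 + i with hj
  have hjx : |(j : ℝ)| ≤ 2 * x := by
    have h1 : |k / 2| ≤ |k| := by
      rw [abs_le]
      rcases abs_cases k with h | h <;> omega
    have h2 : |((k / 2 : ℤ) : ℝ)| ≤ x := by rw [hx]; exact_mod_cast h1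
    have h3 := abs_add_le ((k / 2 : ℤ) : ℝ) (i : ℝ)
    have h4 : (i : ℝ) ≤ x := by nlinarith
    rw [hj]
    push_cast
    rw [abs_of_nonneg (Nat.cast_nonneg i : (0 : ℝ) ≤ i)] at h3
    linarith
  have hjd : η * x - 2 ≤ |(j : ℝ) - ((k - j : ℤ) : ℝ)| := by
    have h1 : (i : ℤ) - 1 ≤ j - (k - j) := by omega
    have h2 : (i : ℝ) - 1 ≤ (j : ℝ) - ((k - j : ℤ) : ℝ) := by exact_mod_cast h1
    linarith [le_abs_self ((j : ℝ) - ((k - j : ℤ) : ℝ))]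
  have hle : ∀ s n, |Φ s n| ≤ 1 := by
    intro s n
    have := le_hasSum (hs1 s) n (fun j _ => sq_nonneg _)
    simpa using this
  have hA : ∀ s, |Φ s j| ^ 2 ≤ C2 * Real.exp (-(κ / 2) * x) := by
    intro s
    obtain ⟨E, hE⟩ := heig s
    have hEb := aux_E _ _ E G hE (fun n => hG _) (hs1 s)
    have hKb : ∀ n : ℤ, |E - v (θ + n * α)| ≤ K := by
      intro n
      refine (abs_sub _ _).trans ?_
      linarith [hG (θ + n * α)]
    have h1 := aux_reflect _ _ E K Cv b k hCv.le (Real.exp_pos _).le hb1 hE hKb hrefl (hs1 s) i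
    rw [← hj] at h1
    have h2 := hB s j (k - j)
    have hP : (K + 2) ^ i * ((Cv + K + 2) * b) ≤ (Cv + K + 2) * Real.exp (-(κ / 2) * x) := by
      have : (K + 2) ^ i = Real.exp (i * L) := by
        rw [Real.exp_nat_mul, hL, Real.exp_log (by linarith)]
      rw [this, mul_left_comm, hb, ← Real.exp_add]
      apply mul_le_mul_of_nonneg_left _ (by positivity)
      apply Real.exp_le_exp.2
      have a1 : (i : ℝ) * L ≤ η * x * L := by gcongr
      have a2 : η * L * x ≤ c / 4 * x := by gcongr
      have a3 : κ * x ≤ c / 4 * x := by gcongr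
      have a4 : 0 ≤ c * x := by positivity
      linarith
    have hQ : C1 * Real.exp (κ / 16 * |(j : ℝ)| - γ / 2 * |(j : ℝ) - ((k - j : ℤ) : ℝ)|) ≤
        C1 * Real.exp (2 * (γ / 2)) * Real.exp (-(κ / 2) * x) := by
      rw [mul_assoc, ← Real.exp_add]
      apply mul_le_mul_of_nonneg_left _ hC1.le
      apply Real.exp_le_exp.2
      have a1 : κ / 16 * |(j : ℝ)| ≤ κ / 16 * (2 * x) := by gcongr
      have a2 : γ / 2 * (η * x - 2) ≤ γ / 2 * |(j : ℝ) - ((k - j : ℤ) : ℝ)| := by gcongr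
      have a3 : κ * x ≤ γ / 2 * η * x := by gcongr
      have a4 : 0 ≤ κ * x := by positivity
      linarith
    have h3 : |Φ s j| ^ 2 ≤ |Φ s j * Φ s (k - j)| + (K + 2) ^ i * ((Cv + K + 2) * b) := by
      have hp : 0 ≤ (K + 2) ^ i * ((Cv + K + 2) * b) := by positivity
      rw [abs_mul, pow_two]
      have := mul_le_mul_of_nonneg_left h1 (abs_nonneg (Φ s j))
      rw [mul_add] at this
      have := mul_le_mul_of_nonneg_right (hle s j) hp
      linarith
    rw [hC2, add_mul]
    simp only at h2
    linarith
  have hfinal : ∀ s n, |Φ s j * Φ s n| ≤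
      M * Real.exp (-(κ / 16) * x) * Real.exp (-(γ / 4) * |((j - n : ℤ) : ℝ)|) := by
    intro s n
    have h2 := hB s j n
    simp only at h2
    have h1 : |Φ s j * Φ s n| ≤ |Φ s j| := by
      rw [abs_mul]
      exact mul_le_of_le_one_right (abs_nonneg _) (hle s n)
    have h3 : |Φ s j * Φ s n| ^ 2 ≤ C2 * Real.exp (-(κ / 2) * x) :=
      (pow_le_pow_left₀ (abs_nonneg _) h1 2).trans (hA s)
    have h4 := pow_le_pow_left₀ (abs_nonneg _) h2 2
    have h5 := mul_le_mul h3 h4 (by positivity) (by positivity)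
    have h6 : |Φ s j * Φ s n| ^ 4 ≤
      (M * Real.exp (-(κ / 16) * x) * Real.exp (-(γ / 4) * |((j - n : ℤ) : ℝ)|)) ^ 4 := by
      rw [show |Φ s j * Φ s n| ^ 4 = |Φ s j * Φ s n| ^ 2 * |Φ s j * Φ s n| ^ 2 by ring]
      refine h5.trans ?_
      rw [mul_pow, mul_pow, mul_pow, ← Real.exp_nat_mul, ← Real.exp_nat_mul, ← Real.exp_nat_mul]
      calc _ = (C2 * C1 ^ 2) * (Real.exp (-(κ / 2) * x) * Real.exp (((2 : ℕ) : ℝ) *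
              (κ / 16 * |(j : ℝ)| - γ / 2 * |(j : ℝ) - n|))) := by ring
        _ ≤ M ^ 4 * (Real.exp (((4 : ℕ) : ℝ) * (-(κ / 16) * x)) *
            Real.exp (((4 : ℕ) : ℝ) * (-(γ / 4) * |((j - n : ℤ) : ℝ)|))) := by
          apply mul_le_mul
          · have : M ≤ M ^ 4 := le_self_pow₀ hM1 (by norm_num)
            linarith
          · rw [← Real.exp_add, ← Real.exp_add]
            apply Real.exp_le_exp.2
            push_cast
            have a1 : κ / 16 * |(j : ℝ)| ≤ κ / 16 * (2 * x) := by gcongr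
            linarith
          · positivity
          · positivity
        _ = _ := by ring
    exact (pow_le_pow_iff_left₀ (abs_nonneg _) (by positivity) (by norm_num)).1 h6
  have hsub : Summable (fun n : ℤ => Real.exp (-(γ / 4) * |((j - n : ℤ) : ℝ)|)) :=
    (Equiv.subLeft j).summable_iff.2 hSs
  have hlast := aux_sum (fun s n => Φ s n) hs1 hs2 j _ (hsub.mul_left _) hfinal
  rw [tsum_mul_left, show ∑' n : ℤ, Real.exp (-(γ / 4) * |((j - n : ℤ) : ℝ)|) = S from
    (Equiv.subLeft j).tsum_eq (fun n : ℤ => Real.exp (-(γ / 4) * |(n : ℝ)|))] at hlast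
  have hexp := Real.add_one_le_exp (κ / 16 * x)
  have hMS : M * S ≤ κ / 16 * x := by
    calc M * S = κ / 16 * (16 / κ * (M * S)) := by field_simp
      _ ≤ _ := by gcongr
  have hlt : M * S < Real.exp (κ / 16 * x) := by linarith
  have e1 : Real.exp (-(κ / 16) * x) * Real.exp (κ / 16 * x) = 1 := by
    rw [← Real.exp_add]; simp
  have h8 := mul_lt_mul_of_pos_left hlt (Real.exp_pos (-(κ / 16) * x))
  rw [e1] at h8
  linarith
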